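/- For every finite tree T with at least two vertices, RTD(C_con(T)) = ℓ(T), where ℓ(T) is the number of leaves of T. -/

import Mathlib

open scoped Classical

noncomputable section

/-! ### Concept classes, VC-dimension, teaching dimension, RTD -/

variable {X : Type*}

/-- A set `S` is shattered by the concept class `𝒞` if every subset of `S`
is the trace on `S` of some concept in `𝒞`. -/
def Shatters [DecidableEq X] (𝒞 : Finset (Finset X)) (S : Finset X) : Prop :=
  ∀ S' ⊆ S, ∃ C ∈ 𝒞, C ∩ S = S'

/-- The VC-dimension of a concept class: the maximum size of a shattered set. -/
def VCD [DecidableEq X] (𝒞 : Finset (Finset X)) : ℕ :=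
  sSup {n | ∃ S : Finset X, Shatters 𝒞 S ∧ S.card = n}

/-- `D` is a teaching set for the concept `C` within the class `𝒞`:
no other concept of `𝒞` agrees with `C` on all of `D`. -/
def IsTeachingSet [DecidableEq X] (𝒞 : Finset (Finset X)) (C D : Finset X) : Prop :=
  ∀ C' ∈ 𝒞, C' ≠ C → ∃ x ∈ D, ¬ ((x ∈ C') ↔ (x ∈ C))

/-- The teaching dimension of the concept `C` within the class `𝒞`:
the minimum size of a teaching set for `C` in `𝒞`. -/
def TD [DecidableEq X] (𝒞 : Finset (Finset X)) (C : Finset X) : ℕ :=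
  sInf {n | ∃ D : Finset X, IsTeachingSet 𝒞 C D ∧ D.card = n}

/-- The minimum teaching dimension over all concepts of the class. -/
def TDmin [DecidableEq X] (𝒞 : Finset (Finset X)) : ℕ :=
  sInf {n | ∃ C ∈ 𝒞, TD 𝒞 C = n}

/-- The recursive teaching dimension: with `𝒞_min` the set of concepts of `𝒞` whose
teaching dimension equals `TDmin 𝒞`, we have `RTD 𝒞 = TDmin 𝒞` if `𝒞 = 𝒞_min`
and `RTD 𝒞 = max (TDmin 𝒞) (RTD (𝒞 \ 𝒞_min))` otherwise. -/
def RTD [DecidableEq X] (𝒞 : Finset (Finset X)) : ℕ :=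
  if h : 𝒞 = 𝒞.filter (fun C => TD 𝒞 C = TDmin 𝒞) then TDmin 𝒞
  else max (TDmin 𝒞) (RTD (𝒞 \ 𝒞.filter (fun C => TD 𝒞 C = TDmin 𝒞)))
termination_by 𝒞.card
decreasing_by
  have hne : 𝒞.Nonempty := by
    rcases Finset.eq_empty_or_nonempty 𝒞 with he | hne
    · exact absurd (by simp [he]) h
    · exact hne
  obtain ⟨C₀, hC₀⟩ := hne
  have hmem : TDmin 𝒞 ∈ {n | ∃ C ∈ 𝒞, TD 𝒞 C = n} :=
    Nat.sInf_mem ⟨TD 𝒞 C₀, C₀, hC₀, rfl⟩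
  obtain ⟨C, hC, hTD⟩ := hmem
  refine Finset.card_lt_card ?_
  refine (Finset.ssubset_iff_of_subset Finset.sdiff_subset).mpr ?_
  exact ⟨C, hC, by simp [Finset.mem_sdiff, Finset.mem_filter, hC, hTD]⟩

/-! ### Graph-theoretic notions -/

/-- The degree of a vertex in a graph on a finite vertex type. -/
def deg {W : Type*} [Fintype W] (T : SimpleGraph W) (v : W) : ℕ :=
  (Finset.univ.filter (fun w => T.Adj v w)).card

/-- A leaf of a graph (in particular, of a tree) is a vertex of degree 1. -/
def IsLeaf {W : Type*} [Fintype W] (T : SimpleGraph W) (v : W) : Prop :=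
  deg T v = 1

/-- The number of leaves of a graph (in particular, of a tree). -/
def leafCount {W : Type*} [Fintype W] (T : SimpleGraph W) : ℕ :=
  (Finset.univ.filter (fun v => IsLeaf T v)).card

variable {V : Type*} [Fintype V] [DecidableEq V]

/-- The open neighborhood of a vertex, as a finset. -/
def nbrFinset (G : SimpleGraph V) (x : V) : Finset V :=
  Finset.univ.filter (fun y => G.Adj x y)

/-- The closed neighborhood of a vertex, as a finset. -/
def closedNbr (G : SimpleGraph V) (x : V) : Finset V :=
  insert x (nbrFinset G x)

/-- The maximum degree `Δ(G)`. -/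
def maxDeg (G : SimpleGraph V) : ℕ :=
  Finset.univ.sup (deg G)

/-- The closed neighborhood of a set of vertices. -/
def closedNbrSet (G : SimpleGraph V) (A : Finset V) : Finset V :=
  A.biUnion (closedNbr G)

/-- The open neighborhood of a set of vertices: `N_G(A) \ A`. -/
def openNbrSet (G : SimpleGraph V) (A : Finset V) : Finset V :=
  closedNbrSet G A \ A

/-- The star class of `G`: all sets `{x} ∪ X` with `X` a set of neighbors of `x`. -/
def Cstar (G : SimpleGraph V) : Finset (Finset V) :=
  Finset.univ.filter (fun C => ∃ x : V, ∃ Y ⊆ nbrFinset G x, C = insert x Y)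

/-- `A` is a connected set of `G`: the induced subgraph `G[A]` is connected. -/
def IsConnSet (G : SimpleGraph V) (A : Finset V) : Prop :=
  (G.induce (A : Set V)).Connected

/-- The class of connected sets of `G` (including the empty set). -/
def Ccon (G : SimpleGraph V) : Finset (Finset V) :=
  Finset.univ.filter (fun A => A = ∅ ∨ IsConnSet G A)

/-- For connected `G`: the maximum number of leaves over all spanning trees of `G`. -/
def ell (G : SimpleGraph V) : ℕ :=
  sSup {k | ∃ T : SimpleGraph V, T ≤ G ∧ T.IsTree ∧ leafCount T = k}

/-- For a general graph `G`: the maximum of `ell` over the connected components of `G`. -/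
def ellGen (G : SimpleGraph V) : ℕ :=
  sSup {k | ∃ c : G.ConnectedComponent, ell (G.induce c.supp) = k}

/-- Every pair of distinct elements of `L` can be connected by a path in `G` which
contains neither `u` nor any element of `L` other than the two endpoints. -/
def ConnectableAvoiding (G : SimpleGraph V) (L : Set V) (u : V) : Prop :=
  ∀ a ∈ L, ∀ b ∈ L, a ≠ b → ∃ p : G.Walk a b, p.IsPath ∧
    ∀ v ∈ p.support, v ≠ u ∧ (v ∈ L → v = a ∨ v = b)

end


section RTDgeneral

variable {X : Type*} [DecidableEq X]

theorem TD_le_of {𝒞 : Finset (Finset X)} {C D : Finset X} (h : IsTeachingSet 𝒞 C D) :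
    TD 𝒞 C ≤ D.card := Nat.sInf_le ⟨D, h, rfl⟩

theorem TD_spec [Fintype X] (𝒞 : Finset (Finset X)) (C : Finset X) :
    ∃ D : Finset X, IsTeachingSet 𝒞 C D ∧ D.card = TD 𝒞 C := by
  refine Nat.sInf_mem (s := {n | ∃ D : Finset X, IsTeachingSet 𝒞 C D ∧ D.card = n})
    ⟨_, Finset.univ, ?_, rfl⟩
  intro C' _ hne
  by_contra hcon
  push Not at hcon
  exact hne (Finset.ext fun x => hcon x (Finset.mem_univ x))

theorem TDmin_le_of {𝒞 : Finset (Finset X)} {C : Finset X} (h : C ∈ 𝒞) :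
    TDmin 𝒞 ≤ TD 𝒞 C := Nat.sInf_le ⟨C, h, rfl⟩

theorem TDmin_spec {𝒞 : Finset (Finset X)} (h : 𝒞.Nonempty) :
    ∃ C ∈ 𝒞, TD 𝒞 C = TDmin 𝒞 := by
  obtain ⟨C, hC⟩ := h
  exact Nat.sInf_mem (s := {n | ∃ C ∈ 𝒞, TD 𝒞 C = n}) ⟨_, C, hC, rfl⟩

theorem TDmin_empty : TDmin (∅ : Finset (Finset X)) = 0 := by
  simp [TDmin]

theorem TDmin_le_RTD (𝒞 : Finset (Finset X)) : TDmin 𝒞 ≤ RTD 𝒞 := by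
  rw [RTD]
  split_ifs
  · exact le_rfl
  · exact le_max_left _ _

theorem RTD_upper (k : ℕ) (n : ℕ) : ∀ 𝒞 : Finset (Finset X), 𝒞.card ≤ n →
    (∀ 𝒟 ⊆ 𝒞, 𝒟.Nonempty → ∃ C ∈ 𝒟, TD 𝒟 C ≤ k) → RTD 𝒞 ≤ k := by
  induction n with
  | zero =>
    intro 𝒞 hc _
    have : 𝒞 = ∅ := Finset.card_eq_zero.mp (by omega)
    subst this
    rw [RTD]
    simp [TDmin_empty]
  | succ n ih =>
    intro 𝒞 hc h
    have hmin : TDmin 𝒞 ≤ k := by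
      rcases Finset.eq_empty_or_nonempty 𝒞 with he | hne
      · rw [he, TDmin_empty]; exact Nat.zero_le _
      · obtain ⟨C, hC, hk⟩ := h 𝒞 (Finset.Subset.refl _) hne
        exact (TDmin_le_of hC).trans hk
    rw [RTD]
    split_ifs with hs
    · exact hmin
    · refine max_le hmin (ih _ ?_ fun 𝒟 h𝒟 => h 𝒟 (h𝒟.trans Finset.sdiff_subset))
      have hne : 𝒞.Nonempty := by
        rcases Finset.eq_empty_or_nonempty 𝒞 with he | hne
        · exact absurd (by simp [he]) hs
        · exact hne
      obtain ⟨C, hC, hTD⟩ := TDmin_spec hne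
      have : (𝒞 \ 𝒞.filter (fun C => TD 𝒞 C = TDmin 𝒞)).card < 𝒞.card := by
        refine Finset.card_lt_card ?_
        refine (Finset.ssubset_iff_of_subset Finset.sdiff_subset).mpr ?_
        exact ⟨C, hC, by simp [Finset.mem_sdiff, Finset.mem_filter, hC, hTD]⟩
      omega

theorem RTD_lower [Fintype X] {𝒟 : Finset (Finset X)} (hD : 𝒟.Nonempty) (n : ℕ) :
    ∀ 𝒞 : Finset (Finset X), 𝒞.card ≤ n → 𝒟 ⊆ 𝒞 → TDmin 𝒟 ≤ RTD 𝒞 := by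
  induction n with
  | zero =>
    intro 𝒞 hc h
    have : 𝒞 = ∅ := Finset.card_eq_zero.mp (by omega)
    subst this
    obtain ⟨C, hC⟩ := hD
    exact absurd (h hC) (Finset.notMem_empty _)
  | succ n ih =>
    intro 𝒞 hc h
    by_cases hm : ∃ C ∈ 𝒟, TD 𝒞 C = TDmin 𝒞
    · obtain ⟨C, hC, hTD⟩ := hm
      obtain ⟨D, hDt, hDc⟩ := TD_spec 𝒞 C
      have h1 : TD 𝒟 C ≤ D.card := TD_le_of fun C' hC' => hDt C' (h hC')
      have h2 := TDmin_le_of hC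
      have h3 := TDmin_le_RTD 𝒞
      omega
    · push Not at hm
      obtain ⟨C, hC⟩ := hD
      rw [RTD]
      split_ifs with hs
      · have := h hC
        rw [hs, Finset.mem_filter] at this
        exact absurd this.2 (hm C hC)
      · refine le_trans (ih _ ?_ ?_) (le_max_right _ _)
        · obtain ⟨C₁, hC₁, hTD⟩ := TDmin_spec ⟨C, h hC⟩
          have : (𝒞 \ 𝒞.filter (fun C => TD 𝒞 C = TDmin 𝒞)).card < 𝒞.card := by
            refine Finset.card_lt_card ?_
            refine (Finset.ssubset_iff_of_subset Finset.sdiff_subset).mpr ?_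
            exact ⟨C₁, hC₁, by simp [Finset.mem_sdiff, Finset.mem_filter, hC₁, hTD]⟩
          omega
        · intro E hE
          simp only [Finset.mem_sdiff, Finset.mem_filter, not_and]
          exact ⟨h hE, fun _ => hm E hE⟩

end RTDgeneral

section Trees

variable {V : Type*} [Fintype V] [DecidableEq V]

/-- Connected sets in a tree are convex (version for paths of length two). -/
theorem conn_convex {T : SimpleGraph V} (ht : T.IsTree) {C : Finset V} (hC : IsConnSet T C)
    {a v b : V} (ha : a ∈ C) (hb : b ∈ C) (hab : a ≠ b) (h1 : T.Adj a v) (h2 : T.Adj v b) :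
    v ∈ C := by
  obtain ⟨p, hp⟩ := (hC.preconnected ⟨a, ha⟩ ⟨b, hb⟩).exists_isPath
  let f := (SimpleGraph.Embedding.induce (G := T) (C : Set V)).toHom
  have hf : Function.Injective f := (SimpleGraph.Embedding.induce (G := T) (C : Set V)).injective
  have hq : (p.map f).IsPath := SimpleGraph.Walk.map_isPath_of_injective hf hp
  let r : T.Walk a b := .cons h1 (.cons h2 .nil)
  have hr : r.IsPath := by
    simp [r, SimpleGraph.Walk.isPath_def, h1.ne, h2.ne, hab]
  have heq := ht.IsAcyclic.path_unique ⟨r, hr⟩ ⟨p.map f, hq⟩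
  have hmem : v ∈ r.support := by simp [r]
  have heq' : r = p.map f := congrArg Subtype.val heq
  have key : ∀ y ∈ (p.map f).support, y ∈ C := by
    intro y hy
    rw [SimpleGraph.Walk.support_map, List.mem_map] at hy
    obtain ⟨x, -, hx⟩ := hy
    rw [← hx]
    exact x.2
  rw [heq'] at hmem
  exact key v hmem

theorem conn_insert {T : SimpleGraph V} {C : Finset V} (hC : IsConnSet T C)
    {u v : V} (hu : u ∈ C) (h : T.Adj u v) : IsConnSet T (insert v C) := by
  have h1 := SimpleGraph.induce_union_connected hC.preconnected
    (SimpleGraph.induce_pair_connected_of_adj h).preconnected ⟨u, by simpa using hu, by simp⟩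
  have : ((insert v C : Finset V) : Set V) = (C : Set V) ∪ {u, v} := by
    ext x
    simp only [Finset.coe_insert, Set.mem_insert_iff, Set.mem_union, Finset.mem_coe,
      Set.mem_singleton_iff]
    constructor
    · tauto
    · rintro (h | rfl | rfl) <;> tauto
  unfold IsConnSet
  rw [this]
  exact h1

theorem conn_nonempty {T : SimpleGraph V} {C : Finset V} (hC : IsConnSet T C) : C.Nonempty := by
  obtain ⟨x⟩ := hC.nonempty
  exact ⟨x.1, x.2⟩

theorem exists_out {T : SimpleGraph V} (ht : T.IsTree) {C : Finset V} (hC : C.Nonempty)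
    (hne : C ≠ Finset.univ) : ∃ u ∈ C, ∃ v, v ∉ C ∧ T.Adj u v := by
  obtain ⟨a, ha⟩ := hC
  obtain ⟨b, hb⟩ : ∃ b, b ∉ C := by
    by_contra hcon
    push Not at hcon
    exact hne (Finset.eq_univ_iff_forall.mpr hcon)
  obtain ⟨p⟩ := ht.connected.preconnected a b
  obtain ⟨d, -, h1, h2⟩ := p.exists_boundary_dart (C : Set V) (by simpa using ha) (by simpa using hb)
  exact ⟨d.fst, h1, d.snd, h2, d.adj⟩

theorem leaves_span {T : SimpleGraph V} (ht : T.IsTree) (n : ℕ) : ∀ C : Finset V,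
    Fintype.card V ≤ C.card + n → IsConnSet T C →
    (Finset.univ.filter (fun v => IsLeaf T v)) ⊆ C → C = Finset.univ := by
  induction n with
  | zero =>
    intro C h _ _
    exact (Finset.card_eq_iff_eq_univ C).mp (le_antisymm (Finset.card_le_univ C) (by omega))
  | succ n ih =>
    intro C h hC hL
    by_contra hne
    obtain ⟨u, hu, v, hv, huv⟩ := exists_out ht (conn_nonempty hC) hne
    have hun := ih (insert v C) (by rw [Finset.card_insert_of_notMem hv]; omega)
      (conn_insert hC hu huv) (hL.trans (Finset.subset_insert _ _))
    have hnl : ¬ deg T v = 1 := fun hl => hv (hL (Finset.mem_filter.mpr ⟨Finset.mem_univ _, hl⟩))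
    obtain ⟨b, hb, hbu⟩ : ∃ b, T.Adj v b ∧ b ≠ u := by
      by_contra hcon
      push Not at hcon
      apply hnl
      unfold deg
      rw [Finset.card_eq_one]
      refine ⟨u, ?_⟩
      ext x
      simp only [Finset.mem_filter, Finset.mem_univ, true_and, Finset.mem_singleton]
      exact ⟨hcon x, fun h => h ▸ huv.symm⟩
    have hbC : b ∈ C := by
      have : b ∈ insert v C := hun ▸ Finset.mem_univ b
      exact (Finset.mem_insert.mp this).resolve_left hb.ne'
    exact hv (conn_convex ht hC hu hbC hbu.symm huv hb)

theorem exists_spanning {T : SimpleGraph V} (ht : T.IsTree) (n : ℕ) : ∀ C : Finset V,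
    Fintype.card V ≤ C.card + n → IsConnSet T C →
    ∃ D ⊆ C, D.card ≤ leafCount T ∧ ∀ C', IsConnSet T C' → D ⊆ C' → C ⊆ C' := by
  have base : ∃ D ⊆ (Finset.univ : Finset V), D.card ≤ leafCount T ∧
      ∀ C', IsConnSet T C' → D ⊆ C' → Finset.univ ⊆ C' :=
    ⟨_, Finset.subset_univ _, le_rfl, fun C' hC' hD =>
      (leaves_span ht (Fintype.card V) C' (by omega) hC' hD).ge⟩
  induction n with
  | zero =>
    intro C h _
    have : C = Finset.univ :=
      (Finset.card_eq_iff_eq_univ C).mp (le_antisymm (Finset.card_le_univ C) (by omega))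
    rw [this]; exact base
  | succ n ih =>
    intro C h hC
    by_cases hne : C = Finset.univ
    · rw [hne]; exact base
    obtain ⟨u, hu, v, hv, huv⟩ := exists_out ht (conn_nonempty hC) hne
    obtain ⟨D, hDC, hcard, hD⟩ := ih (insert v C)
      (by rw [Finset.card_insert_of_notMem hv]; omega) (conn_insert hC hu huv)
    by_cases hvD : v ∈ D
    · refine ⟨insert u (D.erase v), ?_, ?_, ?_⟩
      · intro x hx
        rcases Finset.mem_insert.mp hx with rfl | hx
        · exact hu
        · have := Finset.mem_erase.mp hx
          exact (Finset.mem_insert.mp (hDC this.2)).resolve_left this.1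
      · have h1 := Finset.card_insert_le u (D.erase v)
        have h2 := Finset.card_erase_add_one hvD
        omega
      · intro C' hC' hsub x hx
        have huC' : u ∈ C' := hsub (Finset.mem_insert_self _ _)
        have := hD (insert v C') (conn_insert hC' huC' huv) (by
          intro y hy
          by_cases hyv : y = v
          · exact Finset.mem_insert.mpr (Or.inl hyv)
          · exact Finset.mem_insert_of_mem (hsub (Finset.mem_insert_of_mem
              (Finset.mem_erase.mpr ⟨hyv, hy⟩)))) (Finset.mem_insert_of_mem hx)
        exact (Finset.mem_insert.mp this).resolve_left (fun h => hv (h ▸ hx))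
    · refine ⟨D, fun x hx => (Finset.mem_insert.mp (hDC hx)).resolve_left
        (fun h => hvD (h ▸ hx)), hcard, fun C' hC' hs => ?_⟩
      exact (Finset.subset_insert _ _).trans (hD C' hC' hs)

theorem conn_singleton (T : SimpleGraph V) (a : V) : IsConnSet T {a} := by
  unfold IsConnSet
  rw [Finset.coe_singleton, SimpleGraph.induce_singleton_eq_top]
  haveI : Nonempty ({a} : Set V) := ⟨⟨a, rfl⟩⟩
  exact SimpleGraph.connected_top

theorem tree_upper {T : SimpleGraph V} (ht : T.IsTree) (hcard : 2 ≤ Fintype.card V) :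
    RTD (Ccon T) ≤ leafCount T := by
  refine RTD_upper _ _ _ le_rfl fun 𝒟 h𝒟 hne => ?_
  obtain ⟨C, hC, hmax⟩ := Finset.exists_max_image 𝒟 Finset.card hne
  refine ⟨C, hC, ?_⟩
  have hcon : ∀ A ∈ 𝒟, A = ∅ ∨ IsConnSet T A := fun A hA => by
    have := h𝒟 hA
    simpa [Ccon] using this
  rcases hcon C hC with rfl | hCc
  · refine (TD_le_of (D := ∅) ?_).trans (by simp)
    intro C' hC' hne'
    have := hmax C' hC'
    exact absurd (Finset.card_eq_zero.mp (by simpa using this)) hne'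
  · obtain ⟨D, hDC, hDcard, hD⟩ := exists_spanning ht (Fintype.card V) C (by omega) hCc
    refine (TD_le_of (D := D) ?_).trans hDcard
    intro C' hC' hne'
    by_contra hagree
    push Not at hagree
    have hsub : D ⊆ C' := fun x hx => (hagree x hx).mpr (hDC hx)
    have hDne : D.Nonempty := by
      by_contra he
      rw [Finset.not_nonempty_iff_eq_empty] at he
      subst he
      obtain ⟨c, hc⟩ := conn_nonempty hCc
      haveI : Nontrivial V := Fintype.one_lt_card_iff_nontrivial.mp hcard
      obtain ⟨a, ha⟩ := exists_ne c
      have := hD {a} (conn_singleton T a) (Finset.empty_subset _) hc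
      exact ha (Finset.mem_singleton.mp this).symm
    have hC'c : IsConnSet T C' := by
      rcases hcon C' hC' with rfl | h
      · obtain ⟨d, hd⟩ := hDne
        exact absurd (hsub hd) (Finset.notMem_empty _)
      · exact h
    exact hne' (Finset.eq_of_subset_of_card_le (hD C' hC'c hsub) (hmax C' hC')).symm

theorem leaf_unique {T : SimpleGraph V} {v a b : V} (h : IsLeaf T v) (ha : T.Adj v a)
    (hb : T.Adj v b) : a = b := by
  unfold IsLeaf deg at h
  exact Finset.card_le_one.mp h.le a (by simpa using ha) b (by simpa using hb)

theorem reach_aux {T : SimpleGraph V} {S : Finset V} (hS : ∀ v ∈ S, IsLeaf T v) {a b : V}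
    (p : T.Walk a b) (hp : p.IsPath) (ha : a ∈ Finset.univ \ S) (hb : b ∈ Finset.univ \ S) :
    (T.induce ((Finset.univ \ S : Finset V) : Set V)).Reachable ⟨a, ha⟩ ⟨b, hb⟩ := by
  induction p with
  | nil => exact SimpleGraph.Reachable.refl _
  | @cons a c b h q ih =>
    rw [SimpleGraph.Walk.cons_isPath_iff] at hp
    by_cases hc : c ∈ S
    · exfalso
      cases q with
      | nil => exact (Finset.mem_sdiff.mp hb).2 hc
      | cons h' q' =>
        have := leaf_unique (hS c hc) h.symm h'
        subst this
        exact hp.2 (by simp)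
    · have hc' : c ∈ Finset.univ \ S := by simpa using hc
      have hadj : (T.induce ((Finset.univ \ S : Finset V) : Set V)).Adj ⟨a, ha⟩ ⟨c, hc'⟩ := h
      exact hadj.reachable.trans (ih hp.1 hc' hb)

theorem compl_mem {T : SimpleGraph V} (ht : T.IsTree) {S : Finset V}
    (hS : ∀ v ∈ S, IsLeaf T v) : Finset.univ \ S ∈ Ccon T := by
  simp only [Ccon, Finset.mem_filter, Finset.mem_univ, true_and]
  rcases Finset.eq_empty_or_nonempty (Finset.univ \ S) with h | ⟨x, hx⟩
  · exact Or.inl h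
  · right
    haveI : Nonempty ((Finset.univ \ S : Finset V) : Set V) := ⟨⟨x, hx⟩⟩
    refine SimpleGraph.Connected.mk ?_
    rintro ⟨a, ha⟩ ⟨b, hb⟩
    obtain ⟨p, hp⟩ := (ht.connected.preconnected a b).exists_isPath
    exact reach_aux hS p hp ha hb

theorem tree_lower {T : SimpleGraph V} (ht : T.IsTree) : leafCount T ≤ RTD (Ccon T) := by
  set L : Finset V := Finset.univ.filter (fun v => IsLeaf T v) with hLdef
  set 𝒟 : Finset (Finset V) := L.powerset.image (fun S => Finset.univ \ S) with h𝒟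
  have hne : 𝒟.Nonempty := ⟨Finset.univ \ ∅, Finset.mem_image.mpr ⟨∅, by simp, rfl⟩⟩
  refine le_trans ?_ (RTD_lower hne _ (Ccon T) le_rfl ?_)
  · obtain ⟨C, hC, hTD⟩ := TDmin_spec hne
    rw [← hTD]
    obtain ⟨D, hD, hDc⟩ := TD_spec 𝒟 C
    rw [← hDc]
    refine Finset.card_le_card (s := L) fun x hx => ?_
    obtain ⟨S, hS, rfl⟩ := Finset.mem_image.mp hC
    rw [Finset.mem_powerset] at hS
    by_cases hxS : x ∈ S
    · obtain ⟨y, hy, hyn⟩ := hD (Finset.univ \ S.erase x)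
        (Finset.mem_image.mpr ⟨S.erase x, by
          rw [Finset.mem_powerset]; exact (Finset.erase_subset _ _).trans hS, rfl⟩) (by
          intro h
          have : x ∈ Finset.univ \ S := by rw [← h]; simp
          simp [hxS] at this)
      have : y = x := by
        by_contra hyx
        apply hyn
        simp [hyx]
      exact this ▸ hy
    · obtain ⟨y, hy, hyn⟩ := hD (Finset.univ \ insert x S)
        (Finset.mem_image.mpr ⟨insert x S, by
          rw [Finset.mem_powerset]; exact Finset.insert_subset hx hS, rfl⟩) (by
          intro h
          have : x ∈ Finset.univ \ insert x S := by rw [h]; simp [hxS]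
          simp at this)
      have : y = x := by
        by_contra hyx
        apply hyn
        simp [hyx]
      exact this ▸ hy
  · intro C hC
    obtain ⟨S, hS, rfl⟩ := Finset.mem_image.mp hC
    rw [Finset.mem_powerset] at hS
    exact compl_mem ht fun v hv => (Finset.mem_filter.mp (hS hv)).2

end Trees

/-- For every finite tree `T` with at least two vertices,
`RTD(C_con(T)) = ℓ(T)`, the number of leaves of `T`. -/
theorem con_rtd_tree {V : Type*} [Fintype V] [DecidableEq V]
    (T : SimpleGraph V) (htree : T.IsTree) (hcard : 2 ≤ Fintype.card V) :
    RTD (Ccon T) = leafCount T := by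
  exact le_antisymm (tree_upper htree hcard) (tree_lower htree)
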